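/- Let f be analytic on the unit disc D with f(0)=0, f'(0)=1, and let α > 1. If |arg(α + z f''(z)/f'(z))| < arctan(√3/(α−1)) for all z in D, then f is starlike, i.e. Re(z f'(z)/f(z)) > 0 for all z in D. -/

import Mathlib

open Complex Metric Real

/-!
Put `q z = f z / (z * f' z)`, so that starlikeness reads `0 < Re q`, and let
`P z = 1 + z * f'' z / f' z`.
The sector hypothesis bounds `Re P` from below, whereas `Re P → -∞` along the radius ending at a
zero of `f'`. So `f'` has no zeros and `q` is holomorphic, with `q 0 = 1` and `q * P + z * q' = 1`.

If `Re q` is not positive, take a point `z` of least modulus at which it vanishes, say `q z = i y`.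
Jack's lemma, transported to the half plane by a Cayley transform, gives `z * q' z = -m` with
`m ≥ (1 + y ^ 2) / 2`. Hence `P z = -i (1 + m) / y` is purely imaginary with modulus at least
`(3 + y ^ 2) / (2 * |y|) ≥ √3`, which the sector hypothesis excludes.
-/

open Filter Set Topology

section Argument

lemma arg_eq_arctan_of_re_pos {w : ℂ} (hw : 0 < w.re) : arg w = Real.arctan (w.im / w.re) := by
  have hlt := abs_lt.1 (abs_arg_lt_pi_div_two_iff.2 (.inl hw))
  rw [← tan_arg, arctan_tan hlt.1 hlt.2]

lemma abs_arg_lt_arctan_iff {w : ℂ} {c : ℝ} (hw : 0 < w.re) :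
    |arg w| < Real.arctan c ↔ |w.im| < c * w.re := by
  rw [arg_eq_arctan_of_re_pos hw, abs_lt, ← arctan_neg, arctan_lt_arctan_iff,
    arctan_lt_arctan_iff, ← abs_lt, abs_div, abs_of_pos hw, div_lt_iff₀ hw]

lemma re_nonneg_of_abs_arg_lt_arctan {w : ℂ} {c : ℝ} (h : |arg w| < Real.arctan c) : 0 ≤ w.re :=
  abs_arg_le_pi_div_two_iff.1 (h.trans (arctan_lt_pi_div_two c)).le

end Argument

section Nonvanishing

lemma tendsto_sub_mul_logDeriv {𝕜 : Type*} [NontriviallyNormedField 𝕜] [CompleteSpace 𝕜]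
    {g : 𝕜 → 𝕜} {z₀ : 𝕜} (hg : AnalyticAt 𝕜 g z₀) (horder : analyticOrderAt g z₀ ≠ ⊤) :
    Tendsto (fun z ↦ (z - z₀) * logDeriv g z) (𝓝[≠] z₀) (𝓝 (analyticOrderNatAt g z₀)) := by
  obtain ⟨h, hh, hh0, hgh⟩ := hg.analyticOrderAt_ne_top.1 horder
  set n := analyticOrderNatAt g z₀
  have hlim : Tendsto (fun z ↦ n + (z - z₀) * logDeriv h z) (𝓝[≠] z₀) (𝓝 n) := by
    have hcont : ContinuousAt (fun z ↦ n + (z - z₀) * logDeriv h z) z₀ :=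
      continuousAt_const.add ((continuousAt_id.sub continuousAt_const).mul
        (hh.deriv.continuousAt.div hh.continuousAt hh0))
    simpa using hcont.tendsto.mono_left nhdsWithin_le_nhds
  refine hlim.congr' ?_
  filter_upwards [hgh.eventually_nhds.filter_mono nhdsWithin_le_nhds,
    hh.eventually_analyticAt.filter_mono nhdsWithin_le_nhds,
    (hh.continuousAt.eventually_ne hh0).filter_mono nhdsWithin_le_nhds,
    self_mem_nhdsWithin] with z hgz hhz hhz0 hz
  have hsub : z - z₀ ≠ 0 := sub_ne_zero.2 hz
  have hpow : logDeriv (fun w ↦ (w - z₀) ^ n) z = n / (z - z₀) := by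
    rw [logDeriv_fun_pow (by fun_prop), logDeriv_apply, deriv_sub_const, deriv_id'', mul_one_div]
  have hlog : logDeriv g z = n / (z - z₀) + logDeriv h z := by
    rw [(logDeriv_congr_nhds hgz).eq_of_nhds, ← hpow]
    exact logDeriv_mul z (pow_ne_zero n hsub) hhz0 (by fun_prop) hhz.differentiableAt
  rw [hlog]
  field_simp

lemma tendsto_div_sub_one_nhdsLT_one :
    Tendsto (fun t : ℝ ↦ t / (t - 1)) (𝓝[<] 1) atBot := by
  have hcont : Continuous fun t : ℝ ↦ t - 1 := by fun_prop
  have hsub : Tendsto (fun t : ℝ ↦ t - 1) (𝓝[<] 1) (𝓝[<] 0) := by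
    refine tendsto_nhdsWithin_iff.2
      ⟨(hcont.tendsto' 1 0 (sub_self 1)).mono_left nhdsWithin_le_nhds, ?_⟩
    filter_upwards [self_mem_nhdsWithin] with t ht using sub_neg.2 (mem_Iio.1 ht)
  exact (tendsto_id.mono_left nhdsWithin_le_nhds).pos_mul_atBot one_pos
    (tendsto_inv_nhdsLT_zero.comp hsub)

variable {g : ℂ → ℂ} {z₀ : ℂ}

lemma tendsto_re_mul_logDeriv_atBot_of_eq_zero (hg : AnalyticAt ℂ g z₀)
    (horder : analyticOrderAt g z₀ ≠ ⊤) (hz₀ : z₀ ≠ 0) (hgz₀ : g z₀ = 0) :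
    Tendsto (fun t : ℝ ↦ (t * z₀ * logDeriv g (t * z₀)).re) (𝓝[<] 1) atBot := by
  have hradius : Tendsto (fun t : ℝ ↦ t * z₀) (𝓝[<] 1) (𝓝[≠] z₀) := by
    have hcont : Continuous fun t : ℝ ↦ t * z₀ := by fun_prop
    refine tendsto_nhdsWithin_iff.2
      ⟨(hcont.tendsto' 1 z₀ (by simp)).mono_left nhdsWithin_le_nhds, ?_⟩
    filter_upwards [self_mem_nhdsWithin] with t ht
    simpa [hz₀] using ne_of_lt ht
  have hresidue := (continuous_re.tendsto _).comp
    ((tendsto_sub_mul_logDeriv hg horder).comp hradius)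
  have hpos : 0 < (analyticOrderNatAt g z₀ : ℂ).re := by
    rw [natCast_re, Nat.cast_pos, Nat.pos_iff_ne_zero, ← Nat.cast_ne_zero (R := ℕ∞),
      Nat.cast_analyticOrderNatAt horder]
    exact hg.analyticOrderAt_ne_zero.2 hgz₀
  refine (tendsto_div_sub_one_nhdsLT_one.atBot_mul_pos hpos hresidue).congr' ?_
  filter_upwards [self_mem_nhdsWithin] with t ht
  have ht1 : (t - 1 : ℂ) ≠ 0 := mod_cast (sub_neg.2 (mem_Iio.1 ht)).ne
  rw [Function.comp_apply, Function.comp_apply, ← re_ofReal_mul]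
  congr 1
  push_cast
  field_simp

lemma ne_zero_of_forall_le_re_mul_logDeriv {U : Set ℂ} {c : ℝ} (hU : IsOpen U)
    (hUc : IsPreconnected U) (h0U : 0 ∈ U) (hg : DifferentiableOn ℂ g U) (hg0 : g 0 ≠ 0)
    (hre : ∀ z ∈ U, c ≤ (z * logDeriv g z).re) : ∀ z ∈ U, g z ≠ 0 := by
  intro z₀ hz₀U hgz₀
  have hz₀ : z₀ ≠ 0 := fun h ↦ hg0 (h ▸ hgz₀)
  have hga : AnalyticOnNhd ℂ g U := hg.analyticOnNhd hU
  have horder : analyticOrderAt g z₀ ≠ ⊤ := fun htop ↦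
    hg0 (hga.eqOn_zero_of_preconnected_of_eventuallyEq_zero hUc hz₀U
      (analyticOrderAt_eq_top.1 htop) h0U)
  have hradius : ∀ᶠ t : ℝ in 𝓝[<] 1, (t * z₀ : ℂ) ∈ U := by
    have hcont : Continuous fun t : ℝ ↦ t * z₀ := by fun_prop
    exact nhdsWithin_le_nhds ((hU.preimage hcont).mem_nhds (by simpa using hz₀U))
  obtain ⟨t, htU, ht⟩ := (hradius.and ((tendsto_re_mul_logDeriv_atBot_of_eq_zero (hga z₀ hz₀U)
    horder hz₀ hgz₀).eventually_lt_atBot c)).exists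
  exact (hre _ htU).not_gt ht

end Nonvanishing

section BoundaryDerivative

lemma nonneg_of_hasDerivAt_of_isMaxOn_Iic {φ : ℝ → ℝ} {a d : ℝ} (hφ : HasDerivAt φ d a)
    (hmax : IsMaxOn φ (Iic a) a) : 0 ≤ d := by
  have hdir : (-1 : ℝ) ∈ posTangentConeAt (Iic a) a :=
    mem_posTangentConeAt_of_segment_subset ((convex_Iic a).segment_subset self_mem_Iic (by simp))
  simpa using hmax.localize.hasFDerivWithinAt_nonpos hφ.hasFDerivAt.hasFDerivWithinAt hdir

lemma hasDerivAt_norm_sq_comp_exp_mul {w : ℂ → ℂ} {z : ℂ} (hw : DifferentiableAt ℂ w z)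
    (hwz : w z ≠ 0) (c : ℂ) :
    HasDerivAt (fun t : ℝ ↦ ‖w (cexp (t * c) * z)‖ ^ 2)
      (2 * (‖w z‖ ^ 2 * (c * (z * logDeriv w z)).re)) 0 := by
  have hcurve : HasDerivAt (fun s : ℂ ↦ cexp (s * c) * z) (c * z) ((0 : ℝ) : ℂ) := by
    simpa using (((hasDerivAt_id ((0 : ℝ) : ℂ)).mul_const c).cexp).mul_const z
  have hcomp : HasDerivAt (fun t : ℝ ↦ w (cexp (t * c) * z)) (deriv w z * (c * z)) 0 := by
    have hw' : HasDerivAt w (deriv w z) (cexp (((0 : ℝ) : ℂ) * c) * z) := by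
      simpa using hw.hasDerivAt
    exact (hw'.comp ((0 : ℝ) : ℂ) hcurve).comp_ofReal
  convert hcomp.norm_sq using 2
  have hlog : deriv w z * (c * z) = c * (z * logDeriv w z) * w z := by
    rw [logDeriv_apply]
    field_simp
  rw [ofReal_zero, zero_mul, Complex.exp_zero, one_mul, Complex.inner, hlog, mul_assoc,
    mul_conj, normSq_eq_norm_sq, re_mul_ofReal, mul_comm]

lemma norm_le_div_mul_norm_of_mem_closedBall {E F : Type*} [NormedAddCommGroup E]
    [NormedSpace ℂ E] [NormedAddCommGroup F] [NormedSpace ℂ F] {w : E → F} {R M : ℝ} (hR : 0 < R)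
    (hw : DifferentiableOn ℂ w (ball 0 R)) (hw0 : w 0 = 0)
    (hM : ∀ v ∈ closedBall 0 R, ‖w v‖ ≤ M) : ∀ v ∈ closedBall 0 R, ‖w v‖ ≤ M / R * ‖v‖ := by
  intro v hv
  rcases (mem_closedBall_zero_iff.1 hv).lt_or_eq with hlt | heq
  · have hmaps : MapsTo w (ball 0 R) (closedBall (w 0) M) := fun u hu ↦ by
      simpa [hw0] using hM u (ball_subset_closedBall hu)
    simpa [hw0] using dist_le_div_mul_dist_of_mapsTo_ball hw hmaps (mem_ball_zero_iff.2 hlt)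
  · rw [heq, div_mul_cancel₀ _ hR.ne']
    exact hM v hv

/-- **Jack's lemma**. -/
lemma exists_one_le_mul_logDeriv_eq_of_norm_le {w : ℂ → ℂ} {z : ℂ}
    (hw : DifferentiableOn ℂ w (ball 0 ‖z‖)) (hwz : DifferentiableAt ℂ w z) (hw0 : w 0 = 0)
    (hne : w z ≠ 0) (hmax : ∀ v ∈ closedBall 0 ‖z‖, ‖w v‖ ≤ ‖w z‖) :
    ∃ k : ℝ, 1 ≤ k ∧ z * logDeriv w z = k := by
  have hz : 0 < ‖z‖ := norm_pos_iff.2 fun h ↦ hne (h ▸ hw0)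
  have hnorm : 0 < ‖w z‖ ^ 2 := by positivity
  have hangular : (z * logDeriv w z).im = 0 := by
    have hlocal : IsLocalMax (fun t : ℝ ↦ ‖w (cexp (t * I) * z)‖ ^ 2) 0 := by
      refine .of_forall fun t ↦ ?_
      have hle := hmax (cexp (t * I) * z) (by simp [norm_exp_ofReal_mul_I])
      simpa using pow_le_pow_left₀ (norm_nonneg _) hle 2
    have hzero := hlocal.hasDerivAt_eq_zero (hasDerivAt_norm_sq_comp_exp_mul hwz hne I)
    rw [I_mul_re] at hzero
    simpa [hne, -mul_im] using hzero
  have hradial : 1 ≤ (z * logDeriv w z).re := by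
    have hderiv := (hasDerivAt_norm_sq_comp_exp_mul hwz hne 1).sub
      (((Real.hasDerivAt_exp 0).pow 2).mul_const (‖w z‖ ^ 2))
    have hnonneg := nonneg_of_hasDerivAt_of_isMaxOn_Iic hderiv fun t ht ↦ by
      have hexp : ‖cexp (t * 1) * z‖ = rexp t * ‖z‖ := by simp [norm_exp]
      have hle := norm_le_div_mul_norm_of_mem_closedBall hz hw hw0 hmax (cexp (t * 1) * z)
        (mem_closedBall_zero_iff.2 <| hexp.trans_le <|
          mul_le_of_le_one_left hz.le (Real.exp_le_one_iff.2 ht))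
      rw [hexp, mul_comm (rexp t), ← mul_assoc, div_mul_cancel₀ _ hz.ne'] at hle
      have hsq := pow_le_pow_left₀ (norm_nonneg _) hle 2
      rw [mul_pow] at hsq
      simpa [mul_comm] using hsq
    simp only [Real.exp_zero, one_mul, one_pow, mul_one, Nat.cast_ofNat] at hnonneg
    nlinarith
  exact ⟨_, hradial, Complex.ext (ofReal_re _).symm (hangular.trans (ofReal_im _).symm)⟩

end BoundaryDerivative

section HalfPlane

open ComplexConjugate

/-- The Cayley transform carrying the right half plane to the unit disc and `a` to `0`, for
`0 < a.re`. -/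
noncomputable def cayleyAt (a v : ℂ) : ℂ := (v - a) / (v + conj a)

variable {a v : ℂ}

lemma add_conj_ne_zero_of_re_nonneg (ha : 0 < a.re) (hv : 0 ≤ v.re) : v + conj a ≠ 0 := fun h ↦ by
  have hre := congrArg re h
  rw [add_re, conj_re, zero_re] at hre
  linarith

lemma norm_cayleyAt_le_one (ha : 0 < a.re) (hv : 0 ≤ v.re) : ‖cayleyAt a v‖ ≤ 1 := by
  rw [cayleyAt, norm_div,
    div_le_one (norm_pos_iff.2 (add_conj_ne_zero_of_re_nonneg ha hv)),
    ← sq_le_sq₀ (norm_nonneg _) (norm_nonneg _), ← normSq_eq_norm_sq, ← normSq_eq_norm_sq,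
    normSq_apply, normSq_apply]
  simp only [sub_re, sub_im, add_re, add_im, conj_re, conj_im]
  nlinarith [mul_nonneg ha.le hv]

lemma conj_sub_of_re_eq_zero (hv : v.re = 0) : conj (v - a) = -(v + conj a) := by
  apply Complex.ext
  · simp [hv]
  · simp [add_comm]

lemma norm_cayleyAt_eq_one (ha : 0 < a.re) (hv : v.re = 0) : ‖cayleyAt a v‖ = 1 := by
  rw [cayleyAt, norm_div, ← norm_neg (v + conj a), ← conj_sub_of_re_eq_zero hv, norm_conj,
    div_self]
  rw [norm_ne_zero_iff, sub_ne_zero]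
  rintro rfl
  exact ha.ne' hv

lemma logDeriv_cayleyAt_comp_of_re_eq_zero {p : ℂ → ℂ} {z : ℂ}
    (hp : DifferentiableAt ℂ p z) (ha : 0 < a.re)
    (hpz : (p z).re = 0) :
    logDeriv (fun v ↦ cayleyAt a (p v)) z = -(2 * a.re / ‖p z - a‖ ^ 2 * deriv p z) := by
  have hden : p z + conj a ≠ 0 := add_conj_ne_zero_of_re_nonneg ha hpz.ge
  have hnum : p z - a ≠ 0 := by
    rw [← map_ne_zero (starRingEnd ℂ), conj_sub_of_re_eq_zero hpz]
    exact neg_ne_zero.2 hden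
  have hsq : (‖p z - a‖ : ℂ) ^ 2 = -((p z - a) * (p z + conj a)) := by
    rw [← mul_conj', conj_sub_of_re_eq_zero hpz, mul_neg]
  have htrace : (2 * a.re : ℂ) = a + conj a := by rw [add_conj]; push_cast; ring
  simp only [cayleyAt]
  rw [logDeriv_div z hnum hden (by fun_prop) (by fun_prop), logDeriv_apply, logDeriv_apply,
    deriv_sub_const, deriv_add_const, hsq, htrace]
  field_simp
  ring

/-- **Miller–Mocanu lemma**. -/
lemma exists_one_le_mul_deriv_eq_of_re_nonneg {p : ℂ → ℂ} {z : ℂ}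
    (hp : DifferentiableOn ℂ p (ball 0 ‖z‖)) (hpz : DifferentiableAt ℂ p z) (hp0 : 0 < (p 0).re)
    (hnonneg : ∀ v ∈ closedBall 0 ‖z‖, 0 ≤ (p v).re) (hre : (p z).re = 0) :
    ∃ k : ℝ, 1 ≤ k ∧ z * deriv p z = -(k * ‖p z - p 0‖ ^ 2 / (2 * (p 0).re) : ℝ) := by
  have hden : ∀ v ∈ closedBall 0 ‖z‖, p v + conj (p 0) ≠ 0 := fun v hv ↦
    add_conj_ne_zero_of_re_nonneg hp0 (hnonneg v hv)
  have hz : z ∈ closedBall 0 ‖z‖ := by simp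
  have hunit : ‖cayleyAt (p 0) (p z)‖ = 1 := norm_cayleyAt_eq_one hp0 hre
  obtain ⟨k, hk, hlog⟩ := exists_one_le_mul_logDeriv_eq_of_norm_le
    (w := fun v ↦ cayleyAt (p 0) (p v))
    ((hp.sub_const _).div (hp.add_const _) fun v hv ↦ hden v (ball_subset_closedBall hv))
    ((hpz.sub_const _).div (hpz.add_const _) (hden z hz))
    (by simp [cayleyAt])
    (norm_ne_zero_iff.1 (hunit.symm ▸ one_ne_zero))
    (fun v hv ↦ (norm_cayleyAt_le_one hp0 (hnonneg v hv)).trans hunit.ge)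
  refine ⟨k, hk, ?_⟩
  have hre0 : ((p 0).re : ℂ) ≠ 0 := mod_cast hp0.ne'
  have hdist : (‖p z - p 0‖ : ℂ) ≠ 0 := by
    rw [ofReal_ne_zero, norm_ne_zero_iff, sub_ne_zero]
    intro h
    exact hp0.ne' (h ▸ hre)
  rw [logDeriv_cayleyAt_comp_of_re_eq_zero hpz hp0 hre] at hlog
  push_cast
  rw [← hlog]
  field_simp

end HalfPlane

section OpenDoor

lemma exists_eq_zero_forall_closedBall_nonneg {E : Type*} [NormedAddCommGroup E]
    [NormedSpace ℝ E] [ProperSpace E] {u : E → ℝ} {x₁ : E}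
    (hu : ContinuousOn u (closedBall 0 ‖x₁‖)) (hu0 : 0 < u 0) (hx₁ : u x₁ ≤ 0) :
    ∃ x ∈ closedBall 0 ‖x₁‖, u x = 0 ∧ ∀ y ∈ closedBall (0 : E) ‖x‖, 0 ≤ u y := by
  have hcompact : IsCompact (closedBall 0 ‖x₁‖ ∩ u ⁻¹' Iic 0) :=
    (isCompact_closedBall 0 ‖x₁‖).of_isClosed_subset
      (hu.preimage_isClosed_of_isClosed isClosed_closedBall isClosed_Iic) inter_subset_left
  obtain ⟨x, ⟨hx, hux⟩, hmin⟩ :=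
    hcompact.exists_isMinOn ⟨x₁, by simp, hx₁⟩ continuous_norm.continuousOn
  have hball : closedBall (0 : E) ‖x‖ ⊆ closedBall 0 ‖x₁‖ :=
    closedBall_subset_closedBall (mem_closedBall_zero_iff.1 hx)
  have hmaps : MapsTo u (ball 0 ‖x‖) (Ici 0) := fun y hy ↦ by
    by_contra hneg
    exact (mem_ball_zero_iff.1 hy).not_ge
      (hmin ⟨hball (ball_subset_closedBall hy), (not_le.1 hneg : u y < 0).le⟩)
  have hx0 : x ≠ 0 := by
    rintro rfl
    exact hu0.not_ge hux
  have hclosure : closure (ball 0 ‖x‖) = closedBall (0 : E) ‖x‖ :=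
    closure_ball 0 (norm_ne_zero_iff.2 hx0)
  have hnonneg : ∀ y ∈ closedBall (0 : E) ‖x‖, 0 ≤ u y := by
    rw [← hclosure] at hball ⊢
    have hmaps_closure := hmaps.closure_of_continuousOn (hu.mono hball)
    rwa [closure_Ici] at hmaps_closure
  exact ⟨x, hx, le_antisymm hux (hnonneg x (by simp)), hnonneg⟩

lemma re_eq_zero_and_sqrt_three_le_abs_im {q P : ℂ} {m : ℝ} (hq : q.re = 0)
    (hm : (1 + q.im ^ 2) / 2 ≤ m) (h : q * P = 1 + m) : P.re = 0 ∧ √3 ≤ |P.im| := by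
  have hre : -(q.im * P.im) = 1 + m := by simpa [hq] using congrArg re h
  have him : q.im * P.re = 0 := by simpa [hq] using congrArg im h
  have hq0 : q.im ≠ 0 := fun hq0 ↦ by
    rw [hq0] at hre hm
    linarith
  refine ⟨(mul_eq_zero.1 him).resolve_left hq0, ?_⟩
  have hmul : √3 * |q.im| ≤ |P.im| * |q.im| := calc
    √3 * |q.im| ≤ (√3 ^ 2 + |q.im| ^ 2) / 2 := by linarith [two_mul_le_add_sq √3 |q.im|]
    _ = 1 + (1 + q.im ^ 2) / 2 := by rw [Real.sq_sqrt zero_le_three, sq_abs]; ring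
    _ ≤ -(q.im * P.im) := by linarith
    _ ≤ |P.im| * |q.im| := by rw [← abs_mul, mul_comm]; exact neg_le_abs _
  exact le_of_mul_le_mul_right hmul (abs_pos.2 hq0)

lemma re_pos_of_mul_add_mul_deriv_eq_one {q P : ℂ → ℂ} {R : ℝ}
    (hq : DifferentiableOn ℂ q (ball 0 R)) (hq0 : q 0 = 1)
    (hode : ∀ z ∈ ball 0 R, q z * P z + z * deriv q z = 1)
    (hP : ∀ z ∈ ball 0 R, (P z).re = 0 → |(P z).im| < √3) :
    ∀ z ∈ ball 0 R, 0 < (q z).re := by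
  intro z₁ hz₁
  by_contra! hz₁re
  have hsub : closedBall (0 : ℂ) ‖z₁‖ ⊆ ball 0 R := closedBall_subset_ball (mem_ball_zero_iff.1 hz₁)
  obtain ⟨z, hz, hre, hnonneg⟩ := exists_eq_zero_forall_closedBall_nonneg
    (u := fun v ↦ (q v).re) (continuous_re.comp_continuousOn (hq.continuousOn.mono hsub))
    (by simp [hq0]) hz₁re
  have hzR : z ∈ ball 0 R := hsub hz
  obtain ⟨k, hk, hderiv⟩ := exists_one_le_mul_deriv_eq_of_re_nonneg
    (hq.mono (ball_subset_ball (mem_ball_zero_iff.1 hzR).le))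
    (hq.differentiableAt (isOpen_ball.mem_nhds hzR)) (by simp [hq0]) hnonneg hre
  have hdist : ‖q z - q 0‖ ^ 2 = 1 + (q z).im ^ 2 := by
    rw [hq0, ← normSq_eq_norm_sq, normSq_apply, sub_re, sub_im, one_re, one_im, hre]
    ring
  have hm : (1 + (q z).im ^ 2) / 2 ≤ k * ‖q z - q 0‖ ^ 2 / (2 * (q 0).re) := by
    rw [hdist, hq0, one_re, mul_one]
    gcongr
    exact le_mul_of_one_le_left (by positivity) hk
  obtain ⟨hPre, hPim⟩ := re_eq_zero_and_sqrt_three_le_abs_im (P := P z) hre hm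
    (by linear_combination hode z hzR - hderiv)
  exact (hP z hzR hPre).not_ge hPim

end OpenDoor

section Starlike

/-- The function `f z / (z * f' z)` for `f 0 = 0`, the reciprocal of the quantity whose real part
decides starlikeness. Writing `f z / z` as a `dslope` gives the holomorphic extension to `z = 0`. -/
noncomputable def starlikeQuotient (f : ℂ → ℂ) (z : ℂ) : ℂ := dslope f 0 z / deriv f z

variable {f : ℂ → ℂ}

lemma starlikeQuotient_zero (hf' : deriv f 0 ≠ 0) : starlikeQuotient f 0 = 1 := by
  rw [starlikeQuotient, dslope_same, div_self hf']

lemma inv_starlikeQuotient {z : ℂ} (hf0 : f 0 = 0) (hz : z ≠ 0) :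
    (starlikeQuotient f z)⁻¹ = z * deriv f z / f z := by
  rw [starlikeQuotient, dslope_of_ne f hz, slope_def_field, hf0, sub_zero, sub_zero, inv_div,
    div_div_eq_mul_div, mul_comm]

variable {U : Set ℂ}

lemma differentiableOn_starlikeQuotient (hU : IsOpen U) (h0U : 0 ∈ U) (hf : DifferentiableOn ℂ f U)
    (hf' : ∀ z ∈ U, deriv f z ≠ 0) : DifferentiableOn ℂ (starlikeQuotient f) U :=
  ((differentiableOn_dslope (hU.mem_nhds h0U)).2 hf).div (hf.deriv hU) hf'

lemma starlikeQuotient_mul_add_mul_deriv {z : ℂ} (hU : IsOpen U) (h0U : 0 ∈ U)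
    (hf : DifferentiableOn ℂ f U) (hf0 : f 0 = 0) (hz : z ∈ U) (hfz : deriv f z ≠ 0) :
    starlikeQuotient f z * (1 + z * deriv (deriv f) z / deriv f z) +
      z * deriv (starlikeQuotient f) z = 1 := by
  have hd : HasDerivAt (dslope f 0) (deriv (dslope f 0) z) z :=
    (((differentiableOn_dslope (hU.mem_nhds h0U)).2 hf).differentiableAt
      (hU.mem_nhds hz)).hasDerivAt
  have hf'' : HasDerivAt (deriv f) (deriv (deriv f) z) z :=
    ((hf.deriv hU).differentiableAt (hU.mem_nhds hz)).hasDerivAt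
  have hfactor : f = fun w ↦ w * dslope f 0 w := by
    ext w
    simpa [hf0] using (sub_smul_dslope f 0 w).symm
  have hfderiv : deriv f z = dslope f 0 z + z * deriv (dslope f 0) z := by
    conv_lhs => rw [hfactor]
    simpa using ((hasDerivAt_id' z).fun_mul hd).deriv
  have hquot : deriv (starlikeQuotient f) z =
      (deriv (dslope f 0) z * deriv f z - dslope f 0 z * deriv (deriv f) z) / deriv f z ^ 2 :=
    (hd.div hf'' hfz).deriv
  rw [hquot, starlikeQuotient]
  field_simp
  linear_combination -deriv f z * hfderiv

lemma re_mul_deriv_div_pos_of_abs_im_lt_sqrt_three {R : ℝ} (hf : DifferentiableOn ℂ f (ball 0 R))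
    (hf0 : f 0 = 0) (hf' : ∀ z ∈ ball 0 R, deriv f z ≠ 0)
    (hslit : ∀ z ∈ ball 0 R, (1 + z * deriv (deriv f) z / deriv f z).re = 0 →
      |(1 + z * deriv (deriv f) z / deriv f z).im| < √3) :
    ∀ z ∈ ball 0 R, z ≠ 0 → 0 < (z * deriv f z / f z).re := by
  intro z hz hz0
  have h0 : (0 : ℂ) ∈ ball 0 R := mem_ball_self (pos_of_mem_ball hz)
  have hpos : 0 < (starlikeQuotient f z).re := re_pos_of_mul_add_mul_deriv_eq_one
    (differentiableOn_starlikeQuotient isOpen_ball h0 hf hf') (starlikeQuotient_zero (hf' 0 h0))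
    (fun w hw ↦ starlikeQuotient_mul_add_mul_deriv isOpen_ball h0 hf hf0 hw (hf' w hw)) hslit z hz
  rw [← inv_starlikeQuotient hf0 hz0, inv_re]
  exact div_pos hpos (normSq_pos.2 fun h ↦ hpos.ne' (by rw [h, zero_re]))

end Starlike

theorem stmt_0 (f : ℂ → ℂ) (α : ℝ) (hα : 1 < α)
    (hf : DifferentiableOn ℂ f (ball 0 1)) (hf0 : f 0 = 0) (hf1 : deriv f 0 = 1)
    (harg : ∀ z ∈ ball (0 : ℂ) 1,
      |Complex.arg ((α : ℂ) + z * deriv (deriv f) z / deriv f z)| <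
        Real.arctan (Real.sqrt 3 / (α - 1))) :
    ∀ z ∈ ball (0 : ℂ) 1, z ≠ 0 → 0 < (z * deriv f z / f z).re := by
  have hf' : ∀ z ∈ ball (0 : ℂ) 1, deriv f z ≠ 0 := by
    refine ne_zero_of_forall_le_re_mul_logDeriv (c := -α) isOpen_ball
      (convex_ball 0 1).isPreconnected (mem_ball_self one_pos) (hf.deriv isOpen_ball)
      (hf1 ▸ one_ne_zero) fun z hz ↦ ?_
    have hre := re_nonneg_of_abs_arg_lt_arctan (harg z hz)
    rw [add_re, ofReal_re, mul_div_assoc] at hre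
    exact neg_le_iff_add_nonneg'.2 hre
  refine re_mul_deriv_div_pos_of_abs_im_lt_sqrt_three hf hf0 hf' fun z hz hP ↦ ?_
  have hα' : 0 < α - 1 := sub_pos.2 hα
  have hsplit : (α : ℂ) + z * deriv (deriv f) z / deriv f z =
      (α - 1 : ℝ) + (1 + z * deriv (deriv f) z / deriv f z) := by push_cast; ring
  have hsector := harg z hz
  rw [hsplit, abs_arg_lt_arctan_iff (by rwa [add_re, hP, ofReal_re, add_zero]), add_re, add_im,
    hP, ofReal_re, ofReal_im, add_zero, zero_add, div_mul_cancel₀ _ hα'.ne'] at hsector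
  exact hsector
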